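/- arXiv:2410.08757 — 6 statements merged into one kernel-verified Lean document; each statement's English description precedes it below -/
import Mathlib

section
/- Let κ be a regular uncountable cardinal and let (T,<_T) be a κ-tree. Then T is special if and only if there exist a club D ⊆ κ and an ordinal-valued function c defined on T↾D such that c(x) < ht(x) for every x ∈ T↾D, and c(x) ≠ c(y) whenever x <_T y with both x,y ∈ T↾D. -/
open Set Cardinal Ordinal Order

noncomputable section

universe u

/-- `D` is a club (closed unbounded set) in `κ`. -/
def IsClubIn (D : Set Ordinal.{0}) (κ : Ordinal.{0}) : Prop :=
  D ⊆ Iio κ ∧ (∀ ε, ε < κ → 0 < ε → sSup (D ∩ Iio ε) = ε → ε ∈ D) ∧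
    ∀ α, α < κ → ∃ δ ∈ D, α < δ

/-- A chain with respect to a strict relation. -/
def chainIn {T : Type u} (lt : T → T → Prop) (c : Set T) : Prop :=
  ∀ a ∈ c, ∀ b ∈ c, a = b ∨ lt a b ∨ lt b a

/-- An antichain with respect to a strict relation. -/
def antichainIn {T : Type u} (lt : T → T → Prop) (A : Set T) : Prop :=
  ∀ a ∈ A, ∀ b ∈ A, a ≠ b → ¬ lt a b ∧ ¬ lt b a

/-- The subset `S` is special with respect to `lt`: there is a regressive map
each of whose fibers is the union of fewer than `κ` antichains. -/
def SpecialOn {T : Type u} (κ : Cardinal.{0}) (S : Set T) (lt : T → T → Prop) : Prop :=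
  ∃ f : T → T,
    (∀ x ∈ S, f x ∈ S ∧ ((∃ y ∈ S, lt y x) → lt (f x) x)) ∧
    ∀ z : T, ∃ 𝒜 : Set (Set T), #𝒜 < Cardinal.lift.{u} κ ∧
      (∀ A ∈ 𝒜, A ⊆ S ∧ antichainIn lt A) ∧ {x ∈ S | f x = z} ⊆ ⋃₀ 𝒜

/-- A set is well-ordered by a relation. -/
def wellOrderedOn {T : Type u} (A : Set T) (lt : T → T → Prop) : Prop :=
  (∀ a ∈ A, ∀ b ∈ A, lt a b ∨ a = b ∨ lt b a) ∧
  (∀ B ⊆ A, B.Nonempty → ∃ m ∈ B, ∀ b ∈ B, ¬ lt b m)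

/-- The height of a point of a tree: the order type of its set of predecessors. -/
noncomputable def htOf {T : Type} (lt : T → T → Prop) (x : T) : Ordinal.{0} := by
  classical
  exact if h : IsWellOrder {y // lt y x} (fun a b => lt a.1 b.1) then @Ordinal.type _ _ h
    else 0

/-- `(T, lt)` is a `κ`-tree. -/
def IsKTree {T : Type} (κ : Cardinal.{0}) (lt : T → T → Prop) : Prop :=
  (∀ x y z : T, lt x y → lt y z → lt x z) ∧
  (∀ x : T, ¬ lt x x) ∧
  (∀ x : T, wellOrderedOn {y | lt y x} lt) ∧
  (∀ x : T, htOf lt x < κ.ord) ∧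
  (∀ α, α < κ.ord → {x : T | htOf lt x = α}.Nonempty) ∧
  (∀ α, α < κ.ord → #{x : T | htOf lt x = α} < κ)

theorem aux_isWellOrder {κ : Cardinal.{0}} {T : Type} {lt : T → T → Prop} (h : IsKTree κ lt)
    (x : T) : IsWellOrder {y // lt y x} (fun a b => lt a.1 b.1) := by
  obtain ⟨htr, hirr, hwo, -⟩ := h
  have hwf : WellFounded (fun a b : {y // lt y x} => lt a.1 b.1) := by
    rw [WellFounded.wellFounded_iff_has_min]
    intro s hs
    obtain ⟨m, ⟨m', hm', rfl⟩, hmin⟩ := (hwo x).2 (Subtype.val '' s)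
      (by rintro _ ⟨y, -, rfl⟩; exact y.2) (hs.image _)
    exact ⟨m', hm', fun b hb => hmin _ ⟨b, hb, rfl⟩⟩
  exact
    { wf := hwf
      trichotomous := fun a b hab hba => by
        rcases (hwo x).1 a.1 a.2 b.1 b.2 with h | h | h
        · exact absurd h hab
        · exact Subtype.ext h
        · exact absurd h hba }

theorem aux_htOf {κ : Cardinal.{0}} {T : Type} {lt : T → T → Prop} (h : IsKTree κ lt)
    (x : T) : htOf lt x = @Ordinal.type _ _ (aux_isWellOrder h x) := by
  unfold htOf
  rw [dif_pos (aux_isWellOrder h x)]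

theorem aux_typein {κ : Cardinal.{0}} {T : Type} {lt : T → T → Prop} (h : IsKTree κ lt)
    (x : T) (y : {y // lt y x}) :
    htOf lt y.1 = @Ordinal.typein _ (fun a b : {y // lt y x} => lt a.1 b.1)
      (aux_isWellOrder h x) y := by
  have := aux_isWellOrder h x
  have := aux_isWellOrder h y.1
  rw [aux_htOf h, ← Ordinal.type_subrel]
  apply RelIso.ordinalType_congr
  exact
    { toFun := fun z => ⟨⟨z.1, h.1 _ _ _ z.2 y.2⟩, z.2⟩
      invFun := fun z => ⟨z.1.1, z.2⟩
      left_inv := fun z => rfl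
      right_inv := fun z => rfl
      map_rel_iff' := Iff.rfl }

theorem aux_ht_lt {κ : Cardinal.{0}} {T : Type} {lt : T → T → Prop} (h : IsKTree κ lt)
    {x y : T} (hxy : lt x y) : htOf lt x < htOf lt y := by
  have := aux_isWellOrder h y
  rw [aux_typein h y ⟨x, hxy⟩, aux_htOf h y]
  exact Ordinal.typein_lt_type _ _

theorem aux_pred {κ : Cardinal.{0}} {T : Type} {lt : T → T → Prop} (h : IsKTree κ lt)
    (x : T) (a : Ordinal.{0}) (ha : a < htOf lt x) : ∃ y, lt y x ∧ htOf lt y = a := by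
  have := aux_isWellOrder h x
  rw [aux_htOf h x] at ha
  obtain ⟨y, hy⟩ := Ordinal.typein_surj _ ha
  exact ⟨y.1, y.2, by rw [aux_typein h x y, hy]⟩

theorem aux_le_level {κ : Cardinal.{0}} (hreg : κ.IsRegular) {T : Type} {lt : T → T → Prop}
    (h : IsKTree κ lt) (α : Ordinal.{0}) (hα : α < κ.ord) :
    #{x : T | htOf lt x ≤ α} < κ := by
  have hlim := Cardinal.isSuccLimit_ord hreg.aleph0_le
  have hα' : α + 1 < κ.ord := hlim.add_one_lt hα
  have hι : #(α + 1).ToType < κ := by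
    rw [Cardinal.mk_toType]; exact Cardinal.lt_ord.1 hα'
  have := (Cardinal.card_iUnion_lt_iff_forall_of_isRegular
    (t := fun i : (α + 1).ToType => {x : T | htOf lt x = (Ordinal.ToType.mk.symm i).1}) hreg hι).2
    (fun i => h.2.2.2.2.2 _ (lt_trans (Ordinal.ToType.mk.symm i).2 hα'))
  refine lt_of_le_of_lt (Cardinal.mk_le_mk_of_subset ?_) this
  intro x hx
  refine mem_iUnion.2 ⟨Ordinal.ToType.mk ⟨htOf lt x, mem_Iio.2 (Order.lt_add_one_iff.2 hx)⟩, ?_⟩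
  simp

theorem aux_club {κ : Cardinal.{0}} (hreg : κ.IsRegular) (hunc : ℵ₀ < κ) {W : Type}
    (h : W → Ordinal.{0}) (hκ : ∀ w, h w < κ.ord) (hlev : ∀ α < κ.ord, #{w | h w ≤ α} < κ) :
    ∃ e : W → Ordinal.{0}, Function.Injective e ∧ ∃ D : Set Ordinal.{0}, IsClubIn D κ.ord ∧
      ∀ δ ∈ D, 0 < δ ∧ ∀ w, h w < δ → e w < δ := by
  have hlim := Cardinal.isSuccLimit_ord hreg.aleph0_le
  have hW : #W ≤ κ := by
    have h1 : (⋃ i : κ.ord.ToType, {w | h w ≤ (Ordinal.ToType.mk.symm i).1}) = Set.univ := by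
      refine eq_univ_of_forall fun w => mem_iUnion.2 ⟨Ordinal.ToType.mk ⟨h w, hκ w⟩, ?_⟩
      simp
    rw [← Cardinal.mk_univ, ← h1]
    refine (Cardinal.mk_iUnion_le_sum_mk).trans ?_
    refine (Cardinal.sum_le_sum _ (fun _ => κ)
      (fun i => (hlev _ (Ordinal.ToType.mk.symm i).2).le)).trans ?_
    simp [Cardinal.mul_eq_self hreg.aleph0_le]
  have : #W ≤ #κ.ord.ToType := by simpa using hW
  obtain ⟨g⟩ := this
  let e : W → Ordinal.{0} := fun w => (Ordinal.ToType.mk.symm (g w)).1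
  have heκ : ∀ w, e w < κ.ord := fun w => (Ordinal.ToType.mk.symm (g w)).2
  have hinj : Function.Injective e := fun a b hab =>
    g.injective (Ordinal.ToType.mk.symm.injective (Subtype.ext hab))
  refine ⟨e, hinj, {δ | δ < κ.ord ∧ 0 < δ ∧ ∀ w, h w < δ → e w < δ},
    ⟨fun δ hδ => hδ.1, ?_, ?_⟩, fun δ hδ => hδ.2⟩
  · intro ε hε h0 hs
    refine ⟨hε, h0, fun w hw => ?_⟩
    rw [← hs] at hw
    have hne : ({δ | δ < κ.ord ∧ 0 < δ ∧ ∀ w, h w < δ → e w < δ} ∩ Iio ε).Nonempty := by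
      by_contra hne
      rw [not_nonempty_iff_eq_empty] at hne
      rw [hne] at hs
      simp at hs
      exact h0.ne hs
    obtain ⟨δ, hδ, hwδ⟩ := exists_lt_of_lt_csSup hne hw
    exact (hδ.1.2.2 w hwδ).trans hδ.2
  · intro α hα
    let G : Ordinal.{0} → Ordinal.{0} := fun β =>
      max (⨆ w : {w // h w ≤ β}, (e w.1 + 1)) (β + 1)
    have hG : ∀ β < κ.ord, G β < κ.ord := by
      intro β hβ
      refine max_lt ?_ (hlim.add_one_lt hβ)
      apply Ordinal.iSup_lt_of_lt_cof
      · rw [hreg.cof_ord]; exact hlev β hβ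
      · intro w; exact hlim.add_one_lt (heκ _)
    have hδ := Cardinal.nfp_lt_ord_of_isRegular hreg hunc.ne' hG (hlim.add_one_lt hα)
    have hαδ : α < nfp G (α + 1) := (lt_add_one α).trans_le (Ordinal.le_nfp _ _)
    refine ⟨nfp G (α + 1), ⟨hδ, (zero_le).trans_lt hαδ, fun w hw => ?_⟩, hαδ⟩
    obtain ⟨n, hn⟩ := Ordinal.lt_nfp_iff.1 hw
    have h2 : e w + 1 ≤ G (G^[n] (α + 1)) :=
      (Ordinal.le_iSup (fun v : {v // h v ≤ G^[n] (α + 1)} => e v.1 + 1) ⟨w, hn.le⟩).trans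
        (le_max_left _ _)
    rw [← Function.iterate_succ_apply' G] at h2
    exact (lt_add_one _).trans_le (h2.trans (Ordinal.iterate_le_nfp _ _ _))

theorem aux_forward (κ : Cardinal.{0}) (hreg : κ.IsRegular)
    (hunc : ℵ₀ < κ) (T : Type) (lt : T → T → Prop) (htree : IsKTree κ lt)
    (hsp : SpecialOn κ (Set.univ : Set T) lt) :
      ∃ D : Set Ordinal.{0}, IsClubIn D κ.ord ∧
        ∃ c : T → Ordinal.{0},
          (∀ x : T, htOf lt x ∈ D → c x < htOf lt x) ∧
          (∀ x y : T, htOf lt x ∈ D → htOf lt y ∈ D → lt x y → c x ≠ c y) := by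
  obtain ⟨f, hf, hfib⟩ := hsp
  choose 𝒜 hcard hanti hcov using hfib
  have hA : ∀ x, ∃ A : 𝒜 (f x), x ∈ A.1 := fun x => by
    obtain ⟨A, hA, hx⟩ := hcov (f x) (show x ∈ {y ∈ Set.univ | f y = f x} from ⟨mem_univ _, rfl⟩)
    exact ⟨⟨A, hA⟩, hx⟩
  choose A hA using hA
  obtain ⟨e, hinj, D, hD, hDe⟩ := aux_club hreg hunc (W := Σ z, 𝒜 z) (fun w => htOf lt w.1)
    (fun w => htree.2.2.2.1 _) (by
      intro α hα
      have := (Cardinal.card_biUnion_lt_iff_forall_of_isRegular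
        (t := fun z (_ : z ∈ {x : T | htOf lt x ≤ α}) =>
          range (fun b : 𝒜 z => (⟨z, b⟩ : Σ z, 𝒜 z))) hreg (aux_le_level hreg htree α hα)).2
        (fun z _ => Cardinal.mk_range_le.trans_lt (by simpa using hcard z))
      refine lt_of_le_of_lt (Cardinal.mk_le_mk_of_subset ?_) this
      rintro ⟨z, a⟩ hz
      exact mem_biUnion (x := z) hz ⟨a, rfl⟩)
  refine ⟨D, hD, fun x => e ⟨f x, A x⟩, fun x hx => ?_, fun x y hx hy hxy heq => ?_⟩
  · obtain ⟨h0, h1⟩ := hDe _ hx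
    obtain ⟨y, hy, -⟩ := aux_pred htree x 0 h0
    exact h1 _ (aux_ht_lt htree ((hf x (mem_univ _)).2 ⟨y, mem_univ _, hy⟩))
  · have h1 := hinj heq
    have h2 : (A x).1 = (A y).1 := by
      have := congrArg (fun w : (Σ z, 𝒜 z) => w.2.1) h1
      exact this
    have hne : x ≠ y := fun h => htree.2.1 y (h ▸ hxy)
    exact ((hanti _ _ (A y).2).2 x (h2 ▸ hA x) y (hA y) hne).1 hxy

theorem aux_backward (κ : Cardinal.{0}) (hreg : κ.IsRegular)
    (T : Type) (lt : T → T → Prop) (htree : IsKTree κ lt)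
    (D : Set Ordinal.{0}) (hD : IsClubIn D κ.ord) (c : T → Ordinal.{0})
    (hc : ∀ x : T, htOf lt x ∈ D → c x < htOf lt x)
    (hcc : ∀ x y : T, htOf lt x ∈ D → htOf lt y ∈ D → lt x y → c x ≠ c y) :
    SpecialOn κ (Set.univ : Set T) lt := by
  classical
  have hlim := Cardinal.isSuccLimit_ord hreg.aleph0_le
  have hbdd : ∀ ε : Ordinal.{0}, BddAbove (D ∩ Iio ε) := fun ε => ⟨ε, fun a ha => ha.2.le⟩
  let a : T → Ordinal.{0} := fun x =>
    if htOf lt x ∈ D then c x else sSup (D ∩ Iio (htOf lt x))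
  have hle : ∀ x, a x ≤ htOf lt x := by
    intro x
    by_cases hx : htOf lt x ∈ D
    · simp only [a, if_pos hx]; exact (hc x hx).le
    · simp only [a, if_neg hx]
      exact csSup_le' fun b hb => hb.2.le
  have hlt : ∀ x, 0 < htOf lt x → a x < htOf lt x := by
    intro x h0
    refine lt_of_le_of_ne (hle x) fun heq => ?_
    by_cases hx : htOf lt x ∈ D
    · simp only [a, if_pos hx] at heq; exact (hc x hx).ne heq
    · simp only [a, if_neg hx] at heq
      exact hx (hD.2.1 _ (htree.2.2.2.1 x) h0 heq)
  have hex : ∀ x, ∃ z, htOf lt z = a x ∧ (0 < htOf lt x → lt z x) := by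
    intro x
    by_cases h0 : 0 < htOf lt x
    · obtain ⟨z, hz, hz'⟩ := aux_pred htree x _ (hlt x h0)
      exact ⟨z, hz', fun _ => hz⟩
    · have : htOf lt x = 0 := le_antisymm (not_lt.1 h0) zero_le
      exact ⟨x, le_antisymm (this.trans_le zero_le) (hle x), fun h => absurd h h0⟩
  choose f hf1 hf2 using hex
  refine ⟨f, fun x _ => ⟨mem_univ _, ?_⟩, fun z => ?_⟩
  · rintro ⟨y, -, hy⟩
    exact hf2 x (zero_le.trans_lt (aux_ht_lt htree hy))
  obtain ⟨γ, hγD, hγ⟩ := hD.2.2 (htOf lt z) (htree.2.2.2.1 z)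
  have hγκ : γ + 1 < κ.ord := hlim.add_one_lt (hD.1 hγD)
  let L : (γ + 1).ToType → Set T := fun i => {x | htOf lt x = (Ordinal.ToType.mk.symm i).1}
  refine ⟨insert {x | htOf lt x ∈ D ∧ c x = htOf lt z} (range L), ?_, ?_, ?_⟩
  · rw [Cardinal.lift_id]
    refine Cardinal.mk_insert_le.trans_lt ?_
    refine Cardinal.add_lt_of_lt hreg.aleph0_le ?_ (Cardinal.one_lt_aleph0.trans_le hreg.aleph0_le)
    refine Cardinal.mk_range_le.trans_lt ?_
    rw [Cardinal.mk_toType]; exact Cardinal.lt_ord.1 hγκ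
  · rintro B (rfl | ⟨i, rfl⟩)
    · refine ⟨subset_univ _, fun x hx y hy _ => ⟨fun h => ?_, fun h => ?_⟩⟩
      · exact hcc x y hx.1 hy.1 h (hx.2.trans hy.2.symm)
      · exact hcc y x hy.1 hx.1 h (hy.2.trans hx.2.symm)
    · refine ⟨subset_univ _, fun x hx y hy _ => ⟨fun h => ?_, fun h => ?_⟩⟩
      · exact (aux_ht_lt htree h).ne (Eq.trans hx (Eq.symm hy))
      · exact (aux_ht_lt htree h).ne (Eq.trans hy (Eq.symm hx))
  · rintro x ⟨-, rfl⟩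
    by_cases hx : htOf lt x ∈ D
    · refine ⟨_, mem_insert _ _, hx, ?_⟩
      rw [hf1]; simp only [a, if_pos hx]
    · have hxγ : htOf lt x ≤ γ := by
        by_contra hcon
        rw [not_le] at hcon
        rw [hf1] at hγ
        simp only [a, if_neg hx] at hγ
        exact hγ.not_ge (le_csSup (hbdd _) ⟨hγD, hcon⟩)
      refine ⟨_, mem_insert_of_mem _
        ⟨Ordinal.ToType.mk ⟨htOf lt x, mem_Iio.2 (Order.lt_add_one_iff.2 hxγ)⟩, rfl⟩, ?_⟩
      simp [L]

/-- Lemma 2.6 (folklore): a `κ`-tree is special iff it admits a good colouring,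
i.e. an ordinal-valued map `c` on `T ↾ D` for some club `D ⊆ κ` that is regressive
on heights and injective on chains. -/
theorem special_iff_good_colouring (κ : Cardinal.{0}) (hreg : κ.IsRegular)
    (hunc : ℵ₀ < κ) (T : Type) (lt : T → T → Prop) (htree : IsKTree κ lt) :
    SpecialOn κ (Set.univ : Set T) lt ↔
      ∃ D : Set Ordinal.{0}, IsClubIn D κ.ord ∧
        ∃ c : T → Ordinal.{0},
          (∀ x : T, htOf lt x ∈ D → c x < htOf lt x) ∧
          (∀ x y : T, htOf lt x ∈ D → htOf lt y ∈ D → lt x y → c x ≠ c y) := by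
  constructor
  · exact aux_forward κ hreg hunc T lt htree
  · rintro ⟨D, hD, c, hc, hcc⟩
    exact aux_backward κ hreg T lt htree D hD c hc hcc

end
end

section
/- Let μ be an infinite cardinal. Let T be a streamlined μ⁺-tree (of functions into an arbitrary set X) that is E^{μ⁺}_{cf(μ)}-coherent. Suppose D ⊆ μ⁺ is a club, Δ := D ∩ E^{μ⁺}_{cf(μ)}, for each δ ∈ Δ a node b_δ ∈ T_δ is given, and d : {b_δ | δ ∈ Δ} → μ⁺ is a function such that d(b_δ) < δ for every δ ∈ Δ and d(b_γ) ≠ d(b_δ) whenever b_γ ⊊ b_δ (d is injective on chains). Then T is special. -/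
open Set Cardinal Ordinal Order

noncomputable section

universe u

/-- Nodes of streamlined trees: partial functions on ordinals, encoded with `Option`. -/
abbrev PFn (X : Type u) := Ordinal.{0} → Option X

/-- Inclusion of partial functions. -/
def pLE {X : Type u} (s t : PFn X) : Prop := ∀ α x, s α = some x → t α = some x

/-- Strict inclusion of partial functions; the tree ordering of streamlined trees. -/
def pLT {X : Type u} (s t : PFn X) : Prop := pLE s t ∧ s ≠ t

/-- The domain (= height) of a node of a streamlined tree. -/
def pDom {X : Type u} (t : PFn X) : Ordinal.{0} := sInf {γ | t γ = none}

/-- Restriction of a node to a level. -/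
def pRestrict {X : Type u} (t : PFn X) (γ : Ordinal.{0}) : PFn X :=
  fun α => if α < γ then t α else none

/-- The node obtained from a total function by restricting it to `Iio γ`. -/
def ofFun {X : Type u} (f : Ordinal.{0} → X) (γ : Ordinal.{0}) : PFn X :=
  fun α => if α < γ then some (f α) else none

/-- `Δ(s,t)`: the least point where `s` and `t` differ. -/
def pDelta {X : Type u} (s t : PFn X) : Ordinal.{0} := sInf {δ | s δ ≠ t δ}

/-- The meet `s ∧ t` of two nodes of a streamlined tree. -/
def pMeet {X : Type u} (s t : PFn X) : PFn X := pRestrict s (pDelta s t)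

/-- `S` is a streamlined `κ`-tree: nodes are functions whose domain is a proper
initial segment of `κ`, `S` is closed under restrictions, all levels below `κ` are
nonempty, and all levels have size less than `κ`. -/
def StreamKTree {X : Type u} (κ : Cardinal.{0}) (S : Set (PFn X)) : Prop :=
  (∀ t ∈ S, ∀ α : Ordinal.{0}, (t α).isSome ↔ α < pDom t) ∧
  (∀ t ∈ S, ∀ γ : Ordinal.{0}, pRestrict t γ ∈ S) ∧
  (∀ t ∈ S, pDom t < κ.ord) ∧
  (∀ γ, γ < κ.ord → ∃ t ∈ S, pDom t = γ) ∧
  (∀ γ, γ < κ.ord → #{t ∈ S | pDom t = γ} < Cardinal.lift.{max 1 u} κ)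

/-- A streamlined `κ`-Aronszajn tree: a streamlined `κ`-tree with no chain of size `κ`. -/
def StreamAronszajn {X : Type u} (κ : Cardinal.{0}) (S : Set (PFn X)) : Prop :=
  StreamKTree κ S ∧ ¬ ∃ c ⊆ S, chainIn pLT c ∧ #c = Cardinal.lift.{max 1 u} κ

/-- `E^κ_θ`: the ordinals below `κ` of cofinality `θ`. -/
def ECof (κ : Ordinal.{0}) (θ : Cardinal.{0}) : Set Ordinal.{0} :=
  {α | α < κ ∧ α.cof = θ}

/-- The streamlined tree `T` is `S`-coherent: any two nodes on a level `δ ∈ S`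
agree from some point below `δ` on. -/
def SCoherent {X : Type u} (S : Set Ordinal.{0}) (T : Set (PFn X)) : Prop :=
  ∀ δ ∈ S, ∀ s ∈ T, ∀ t ∈ T, pDom s = δ → pDom t = δ →
    sSup {γ : Ordinal.{0} | γ < δ ∧ s γ ≠ t γ} < δ

theorem cst_cof_bound (μ : Cardinal.{0}) (hμ : ℵ₀ ≤ μ) (α : Ordinal.{0})
    (h : α.cof ≠ μ.ord.cof) (m : Ordinal.{0} → Ordinal.{0}) (hm : ∀ ξ < α, m ξ < μ.ord) :
    ∃ M < μ.ord, ∀ η < α, ∃ ξ, η ≤ ξ ∧ ξ < α ∧ m ξ ≤ M := by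
  rcases lt_or_gt_of_ne h with h | h
  · obtain ⟨ι, f, hf, hι⟩ := exists_lsub_cof α
    have hfl : ∀ i, f i < α := fun i => hf ▸ lt_lsub f i
    refine ⟨lsub.{0,0} (fun i => m (f i)), lsub_lt_ord (by rw [hι]; exact h)
      (fun i => hm _ (hfl i)), ?_⟩
    intro η hη
    rw [← hf, lt_lsub_iff] at hη
    obtain ⟨i, hi⟩ := hη
    exact ⟨f i, hi, hfl i, (lt_lsub (fun i => m (f i)) i).le⟩
  · by_contra! hc
    obtain ⟨ι, f, hf, hι⟩ := exists_lsub_cof μ.ord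
    have hfl : ∀ i, f i < μ.ord := fun i => hf ▸ lt_lsub f i
    choose η hη hη2 using fun i => hc (f i) (hfl i)
    have hl : lsub.{0,0} η < α := lsub_lt_ord (by rw [hι]; exact h) hη
    have h3 := hm _ hl
    rw [← hf, lt_lsub_iff] at h3
    obtain ⟨i, hi⟩ := h3
    exact absurd (hη2 i _ (lt_lsub η i).le hl) (not_lt.2 hi)

section cst
variable {X : Type u}

theorem cst_restrict_restrict (x : PFn X) {a c : Ordinal.{0}} (h : a ≤ c) :
    pRestrict (pRestrict x c) a = pRestrict x a := by
  funext z
  unfold pRestrict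
  by_cases h1 : z < a
  · simp [h1, h1.trans_le h]
  · simp [h1]

theorem cst_dom_eq {x : PFn X} {a : Ordinal.{0}} (h : ∀ z, (x z).isSome ↔ z < a) :
    pDom x = a := by
  have : {γ | x γ = none} = Ici a := by
    ext z
    have := h z
    rw [Set.mem_setOf_eq, ← Option.not_isSome_iff_eq_none, this, Set.mem_Ici, not_lt]
  unfold pDom
  rw [this, csInf_Ici]

variable {μ : Cardinal.{0}} {T : Set (PFn X)}

theorem cst_dom_restrict (hT : StreamKTree (Order.succ μ) T) {x : PFn X} (hx : x ∈ T)
    {a : Ordinal.{0}} (ha : a ≤ pDom x) : pDom (pRestrict x a) = a := by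
  apply cst_dom_eq
  intro z
  unfold pRestrict
  by_cases h : z < a
  · simp [h, (hT.1 x hx z), h.trans_le ha]
  · simp [h]

theorem cst_none (hT : StreamKTree (Order.succ μ) T) {x : PFn X} (hx : x ∈ T)
    {z : Ordinal.{0}} (hz : pDom x ≤ z) : x z = none := by
  rw [← Option.not_isSome_iff_eq_none, hT.1 x hx z]
  exact not_lt.2 hz

theorem cst_restrict_dom (hT : StreamKTree (Order.succ μ) T) {x : PFn X} (hx : x ∈ T) :
    pRestrict x (pDom x) = x := by
  funext z
  unfold pRestrict
  by_cases h : z < pDom x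
  · simp [h]
  · simp [h, cst_none hT hx (not_lt.1 h)]

theorem cst_le_eq (hT : StreamKTree (Order.succ μ) T) {x y : PFn X} (hx : x ∈ T)
    (h : pLE x y) {z : Ordinal.{0}} (hz : z < pDom x) : y z = x z := by
  have := (hT.1 x hx z).2 hz
  obtain ⟨v, hv⟩ := Option.isSome_iff_exists.1 this
  rw [hv, h z v hv]

theorem cst_le_restrict (hT : StreamKTree (Order.succ μ) T) {x y : PFn X} (hx : x ∈ T)
    (h : pLE x y) : pRestrict y (pDom x) = x := by
  funext z
  unfold pRestrict
  by_cases hz : z < pDom x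
  · simp [hz, cst_le_eq hT hx h hz]
  · simp [hz, cst_none hT hx (not_lt.1 hz)]

theorem cst_lt_dom (hT : StreamKTree (Order.succ μ) T) {x y : PFn X} (hx : x ∈ T)
    (hy : y ∈ T) (h : pLT x y) : pDom x < pDom y := by
  by_contra hc
  apply h.2
  rw [← cst_le_restrict hT hx h.1]
  funext z
  unfold pRestrict
  by_cases hz : z < pDom x
  · simp [hz]
  · simp [hz, cst_none hT hy ((not_lt.1 hc).trans (not_lt.1 hz))]

theorem cst_restrict_lt (hT : StreamKTree (Order.succ μ) T) {x : PFn X} (hx : x ∈ T)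
    {a c : Ordinal.{0}} (h : a < c) (hc : c ≤ pDom x) :
    pLT (pRestrict x a) (pRestrict x c) := by
  constructor
  · intro z v
    unfold pRestrict
    by_cases hz : z < a
    · simp [hz, hz.trans h]
    · simp [hz]
  · intro he
    have h1 := cst_dom_restrict hT hx hc
    rw [← he, cst_dom_restrict hT hx (h.le.trans hc)] at h1
    exact h.ne h1

/-- The ranked, generated sets of nodes. -/
def cstR (μ : Cardinal.{0}) (T : Set (PFn X)) (G : PFn X → Ordinal.{0} × Ordinal.{0})
    (m : Ordinal.{0}) (l : Ordinal.{0}) : Set (PFn X) :=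
  {x | ((pDom x).cof = μ.ord.cof ∧ (G x).2 < m ∧
      ∃ k, ∃ _ : k < l, pRestrict x (G x).1 ∈ cstR μ T G m k) ∨
    (∀ η < pDom x, ∃ ξ, η ≤ ξ ∧ ξ < pDom x ∧
      ∃ k, ∃ _ : k < l, pRestrict x ξ ∈ cstR μ T G m k)}
termination_by l

theorem cstR_mem {G : PFn X → Ordinal.{0} × Ordinal.{0}} {m l : Ordinal.{0}} {x : PFn X} :
    x ∈ cstR μ T G m l ↔ ((pDom x).cof = μ.ord.cof ∧ (G x).2 < m ∧
      ∃ k, ∃ _ : k < l, pRestrict x (G x).1 ∈ cstR μ T G m k) ∨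
    (∀ η < pDom x, ∃ ξ, η ≤ ξ ∧ ξ < pDom x ∧
      ∃ k, ∃ _ : k < l, pRestrict x ξ ∈ cstR μ T G m k) := by
  rw [cstR]; rfl

theorem cstR_mono {G : PFn X → Ordinal.{0} × Ordinal.{0}} {m m' : Ordinal.{0}} (hm : m ≤ m')
    (l : Ordinal.{0}) : ∀ l', l ≤ l' → cstR μ T G m l ⊆ cstR μ T G m' l' := by
  induction l using WellFoundedLT.induction with
  | ind l ih =>
  intro l' hl x hx
  rw [cstR_mem] at hx ⊢
  rcases hx with ⟨h1, h2, k, hk, h3⟩ | h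
  · exact Or.inl ⟨h1, h2.trans_le hm, k, hk.trans_le hl, ih k hk k le_rfl h3⟩
  · right
    intro η hη
    obtain ⟨ξ, h1, h2, k, hk, h3⟩ := h η hη
    exact ⟨ξ, h1, h2, k, hk.trans_le hl, ih k hk k le_rfl h3⟩

theorem cstR_exists (hμ : ℵ₀ ≤ μ) (hT : StreamKTree (Order.succ μ) T)
    {G : PFn X → Ordinal.{0} × Ordinal.{0}}
    (hG : ∀ x ∈ T, (pDom x).cof = μ.ord.cof → (G x).1 < pDom x ∧ (G x).2 < μ.ord)
    (a : Ordinal.{0}) : ∀ x ∈ T, pDom x = a → ∃ m < μ.ord, x ∈ cstR μ T G m m := by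
  have hlim : ∀ o < μ.ord, o + 1 < μ.ord := fun o ho => by
    rw [← Order.succ_eq_add_one]
    exact (isSuccLimit_ord hμ).succ_lt ho
  induction a using WellFoundedLT.induction with
  | ind a ih =>
  intro x hx hxa
  by_cases hc : (pDom x).cof = μ.ord.cof
  · obtain ⟨h1, h2⟩ := hG x hx hc
    obtain ⟨m, hm, hm2⟩ := ih _ (hxa ▸ h1) _ (hT.2.1 x hx (G x).1) (cst_dom_restrict hT hx h1.le)
    refine ⟨max m (G x).2 + 1, hlim _ (max_lt hm h2), ?_⟩
    rw [cstR_mem]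
    refine Or.inl ⟨hc, ?_, m, ?_, ?_⟩
    · exact (le_max_right _ _).trans_lt (Order.lt_add_one_iff.2 le_rfl)
    · exact (le_max_left _ _).trans_lt (Order.lt_add_one_iff.2 le_rfl)
    · exact cstR_mono ((le_max_left _ _).trans (Order.lt_add_one_iff.2 le_rfl).le) m m le_rfl hm2
  · have : ∀ ξ, ∃ m, ξ < a → m < μ.ord ∧ pRestrict x ξ ∈ cstR μ T G m m := by
      intro ξ
      by_cases h : ξ < a
      · obtain ⟨m, h1, h2⟩ := ih ξ h _ (hT.2.1 x hx ξ) (cst_dom_restrict hT hx (hxa ▸ h.le))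
        exact ⟨m, fun _ => ⟨h1, h2⟩⟩
      · exact ⟨0, fun h' => absurd h' h⟩
    choose m hm using this
    obtain ⟨M, hM, hM2⟩ := cst_cof_bound μ hμ a (hxa ▸ hc) m (fun ξ h => (hm ξ h).1)
    refine ⟨M + 1, hlim _ hM, ?_⟩
    rw [cstR_mem]
    right
    rw [hxa]
    intro η hη
    obtain ⟨ξ, h1, h2, h3⟩ := hM2 η hη
    refine ⟨ξ, h1, h2, M, Order.lt_add_one_iff.2 le_rfl, ?_⟩
    exact cstR_mono (h3.trans (Order.lt_add_one_iff.2 le_rfl).le) _ _ h3 (hm ξ h2).2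


theorem cst_union (A : Ordinal.{0} → Set Ordinal.{0}) (s : Set Ordinal.{0}) {B : Cardinal.{1}}
    (hB : ℵ₀ ≤ B) (hs : #s ≤ B) (hA : ∀ j ∈ s, #(A j) ≤ B) :
    #(⋃ j ∈ s, A j : Set Ordinal.{0}) ≤ B := by
  have h1 : (⨆ j : s, #(A j.1)) ≤ B := ciSup_le' fun i => hA i.1 i.2
  exact ((Cardinal.mk_biUnion_le A s).trans (mul_le_mul' hs h1)).trans
    (Cardinal.mul_eq_self hB).le

theorem cst_arith {B L M : Cardinal.{1}} (hB : ℵ₀ ≤ B) (hL : L ≤ B) (hM : M ≤ B) :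
    L * M + (L + 1) ≤ B :=
  Cardinal.add_le_of_le hB (Cardinal.mul_le_of_le hB hL hM)
    (Cardinal.add_le_of_le hB hL (Cardinal.one_le_aleph0.trans hB))

theorem cst_step (S L M : Set Ordinal.{0}) (g : Ordinal.{0} → Ordinal.{0} × Ordinal.{0})
    (S1 S2 : Set Ordinal.{0}) (hS : S ⊆ S1 ∪ S2) (hg : ∀ ξ ∈ S1, g ξ ∈ L ×ˢ M)
    (hi : Set.InjOn g S1) (h2 : ∀ ξ ∈ S2, ∀ η < ξ, ∃ ζ ∈ L, η ≤ ζ ∧ ζ < ξ) :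
    #S ≤ #L * #M + (#L + 1) := by
  have e1 : #S1 ≤ #L * #M := by
    have : #S1 ≤ #(L ×ˢ M : Set _) :=
      Cardinal.mk_le_of_injective (f := fun x : S1 => (⟨g x, hg x x.2⟩ : (L ×ˢ M : Set _)))
        (fun x y h => Subtype.ext (hi x.2 y.2 (congrArg Subtype.val h)))
    rwa [Cardinal.mk_setProd] at this
  have e2 : #S2 ≤ #L + 1 := by
    classical
    rw [← Cardinal.mk_option]
    let F : S2 → Option L := fun x =>
      if h : (L ∩ Ici x.1).Nonempty then some ⟨sInf (L ∩ Ici x.1), (csInf_mem h).1⟩ else none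
    have key : ∀ x y : S2, x.1 < y.1 → F x ≠ F y := by
      intro x y hxy he
      obtain ⟨ζ, hζ, h3, h4⟩ := h2 y y.2 x hxy
      have hx : (L ∩ Ici x.1).Nonempty := ⟨ζ, hζ, h3⟩
      simp only [F, dif_pos hx] at he
      split_ifs at he with hy
      have he := congrArg Subtype.val (Option.some.inj he)
      have h5 : sInf (L ∩ Ici x.1) ≤ ζ := csInf_le' ⟨hζ, h3⟩
      have h6 : y.1 ≤ sInf (L ∩ Ici y.1) := (csInf_mem hy).2
      exact absurd (h6.trans (he.symm.le.trans h5)) (not_le.2 h4)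
    refine Cardinal.mk_le_of_injective (f := F) ?_
    intro x y h
    rcases lt_trichotomy x.1 y.1 with h1 | h1 | h1
    · exact absurd h (key x y h1)
    · exact Subtype.ext h1
    · exact absurd h.symm (key y x h1)
  calc #S ≤ #(S1 ∪ S2 : Set _) := Cardinal.mk_le_mk_of_subset hS
    _ ≤ #S1 + #S2 := Cardinal.mk_union_le _ _
    _ ≤ _ := add_le_add e1 e2

/-- levels of the generated predecessors -/
def cstK (μ : Cardinal.{0}) (T : Set (PFn X)) (G : PFn X → Ordinal.{0} × Ordinal.{0})
    (m : Ordinal.{0}) (x : PFn X) (l : Ordinal.{0}) : Set Ordinal.{0} :=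
  {ξ | ξ ≤ pDom x ∧ pRestrict x ξ ∈ cstR μ T G m l}

theorem cstK_step (hT : StreamKTree (Order.succ μ) T)
    {G : PFn X → Ordinal.{0} × Ordinal.{0}}
    (hG : ∀ x ∈ T, (pDom x).cof = μ.ord.cof → (G x).1 < pDom x ∧ (G x).2 < μ.ord)
    (hG2 : ∀ x ∈ T, ∀ y ∈ T, (pDom x).cof = μ.ord.cof → (pDom y).cof = μ.ord.cof →
      pLT x y → G x ≠ G y) {x : PFn X} (hx : x ∈ T) (m l : Ordinal.{0}) :
    #(cstK μ T G m x l) ≤ #(⋃ k ∈ Iio l, cstK μ T G m x k : Set _) * #(Iio m) +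
      (#(⋃ k ∈ Iio l, cstK μ T G m x k : Set _) + 1) := by
  refine cst_step _ _ _ (fun ξ => G (pRestrict x ξ))
    {ξ | ξ ≤ pDom x ∧ ξ.cof = μ.ord.cof ∧ (G (pRestrict x ξ)).2 < m ∧
      ∃ k, ∃ _ : k < l, pRestrict x (G (pRestrict x ξ)).1 ∈ cstR μ T G m k}
    {ξ | ξ ≤ pDom x ∧ ∀ η < ξ, ∃ ζ, η ≤ ζ ∧ ζ < ξ ∧
      ∃ k, ∃ _ : k < l, pRestrict x ζ ∈ cstR μ T G m k} ?_ ?_ ?_ ?_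
  · rintro ξ ⟨h1, h2⟩
    rw [cstR_mem, cst_dom_restrict hT hx h1] at h2
    rcases h2 with ⟨h3, h4, k, hk, h5⟩ | h2
    · left
      refine ⟨h1, h3, h4, k, hk, ?_⟩
      rwa [cst_restrict_restrict] at h5
      have := (hG _ (hT.2.1 x hx ξ) (by rwa [cst_dom_restrict hT hx h1])).1
      rw [cst_dom_restrict hT hx h1] at this
      exact this.le
    · right
      refine ⟨h1, ?_⟩
      intro η hη
      obtain ⟨ζ, h3, h4, k, hk, h5⟩ := h2 η hη
      rw [cst_restrict_restrict _ h4.le] at h5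
      exact ⟨ζ, h3, h4, k, hk, h5⟩
  · rintro ξ ⟨h1, h3, h4, k, hk, h5⟩
    have := (hG _ (hT.2.1 x hx ξ) (by rwa [cst_dom_restrict hT hx h1])).1
    rw [cst_dom_restrict hT hx h1] at this
    exact ⟨Set.mem_biUnion (show k ∈ Iio l from hk) ⟨this.le.trans h1, h5⟩, h4⟩
  · have key : ∀ ξ η, ξ < η → η ≤ pDom x → ξ.cof = μ.ord.cof → η.cof = μ.ord.cof →
        G (pRestrict x ξ) ≠ G (pRestrict x η) := by
      intro ξ η h1 h2 h3 h4
      exact hG2 _ (hT.2.1 x hx ξ) _ (hT.2.1 x hx η)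
        (by rwa [cst_dom_restrict hT hx (h1.le.trans h2)])
        (by rwa [cst_dom_restrict hT hx h2]) (cst_restrict_lt hT hx h1 h2)
    rintro ξ ⟨h1, h2, -⟩ η ⟨h3, h4, -⟩ he
    rcases lt_trichotomy ξ η with h | h | h
    · exact absurd he (key _ _ h h3 h2 h4)
    · exact h
    · exact absurd he.symm (key _ _ h h1 h4 h2)
  · rintro ξ ⟨h1, h2⟩ η hη
    obtain ⟨ζ, h3, h4, k, hk, h5⟩ := h2 η hη
    exact ⟨ζ, Set.mem_biUnion (show k ∈ Iio l from hk) ⟨h4.le.trans h1, h5⟩, h3, h4⟩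

theorem cstK_card (hμ : ℵ₀ ≤ μ) (hT : StreamKTree (Order.succ μ) T)
    {G : PFn X → Ordinal.{0} × Ordinal.{0}}
    (hG : ∀ x ∈ T, (pDom x).cof = μ.ord.cof → (G x).1 < pDom x ∧ (G x).2 < μ.ord)
    (hG2 : ∀ x ∈ T, ∀ y ∈ T, (pDom x).cof = μ.ord.cof → (pDom y).cof = μ.ord.cof →
      pLT x y → G x ≠ G y) {x : PFn X} (hx : x ∈ T) {m l : Ordinal.{0}}
    (hm : m < μ.ord) (hl : l < μ.ord) :
    #(cstK μ T G m x l) < Cardinal.lift.{1} μ := by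
  have hm' : #(Iio m) < Cardinal.lift.{1} μ := by
    rw [Cardinal.mk_Iio_ordinal, Cardinal.lift_lt]; exact Cardinal.lt_ord.1 hm
  have hl' : #(Iio l) < Cardinal.lift.{1} μ := by
    rw [Cardinal.mk_Iio_ordinal, Cardinal.lift_lt]; exact Cardinal.lt_ord.1 hl
  have hμ' : ℵ₀ ≤ Cardinal.lift.{1} μ := by simpa using hμ
  rcases eq_or_lt_of_le hμ' with he | hlt
  · rw [← he] at hm' hl' ⊢
    clear hl
    induction l using WellFoundedLT.induction with
    | ind l ih =>
    refine (cstK_step hT hG hG2 hx m l).trans_lt ?_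
    have hL : #(⋃ k ∈ Iio l, cstK μ T G m x k : Set _) < ℵ₀ := by
      rw [Cardinal.lt_aleph0_iff_set_finite] at hl' ⊢
      refine hl'.biUnion fun k hk => ?_
      rw [← Cardinal.lt_aleph0_iff_set_finite]
      refine ih k hk ?_
      rw [Cardinal.lt_aleph0_iff_set_finite]
      exact hl'.subset (Iio_subset_Iio (le_of_lt hk))
    exact Cardinal.add_lt_aleph0 (Cardinal.mul_lt_aleph0 hL hm')
      (Cardinal.add_lt_aleph0 hL Cardinal.one_lt_aleph0)
  · set B := max ℵ₀ (max #(Iio m) #(Iio l)) with hB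
    have hB1 : ℵ₀ ≤ B := le_max_left _ _
    have hBm : #(Iio m) ≤ B := (le_max_left _ _).trans (le_max_right _ _)
    have hBl : #(Iio l) ≤ B := (le_max_right _ _).trans (le_max_right _ _)
    suffices h : ∀ k ≤ l, #(cstK μ T G m x k) ≤ B from
      (h l le_rfl).trans_lt (max_lt hlt (max_lt hm' hl'))
    clear_value B
    intro k
    induction k using WellFoundedLT.induction with
    | ind k ih =>
    intro hk
    refine (cstK_step hT hG hG2 hx m k).trans ?_
    have hL : #(⋃ j ∈ Iio k, cstK μ T G m x j : Set _) ≤ B := by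
      exact cst_union _ _ hB1 ((Cardinal.mk_le_mk_of_subset (Iio_subset_Iio hk)).trans hBl)
        fun j hj => ih j hj ((le_of_lt hj).trans hk)
    generalize #(⋃ j ∈ Iio k, cstK μ T G m x j : Set _) = L at hL ⊢
    generalize #(Iio m) = M at hBm ⊢
    exact cst_arith hB1 hL hBm

theorem cst_type_lt (A A' : Set Ordinal.{0}) (a : Ordinal.{0}) (ha : a ∈ A')
    (h : A = A' ∩ Iio a) :
    Ordinal.type (fun p q : A => p < q) < Ordinal.type (fun p q : A' => p < q) := by
  rw [Ordinal.type_lt_iff]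
  subst h
  refine ⟨⟨⟨⟨fun p => ⟨p.1, p.2.1⟩, fun p q he => Subtype.ext (by simpa using he)⟩, Iff.rfl⟩,
    ⟨a, ha⟩, ?_⟩⟩
  rintro ⟨c, hc⟩
  constructor
  · rintro ⟨p, hp⟩
    have : p.1 = c := congrArg Subtype.val hp
    exact this ▸ p.2.2
  · intro hlt
    exact ⟨⟨c, hc, hlt⟩, rfl⟩

theorem cst_main (hμ : ℵ₀ ≤ μ) (hT : StreamKTree (Order.succ μ) T)
    {G : PFn X → Ordinal.{0} × Ordinal.{0}}
    (hG : ∀ x ∈ T, (pDom x).cof = μ.ord.cof → (G x).1 < pDom x ∧ (G x).2 < μ.ord)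
    (hG2 : ∀ x ∈ T, ∀ y ∈ T, (pDom x).cof = μ.ord.cof → (pDom y).cof = μ.ord.cof →
      pLT x y → G x ≠ G y) : SpecialOn (Order.succ μ) T pLT := by
  have hex : ∀ x, ∃ m, x ∈ T → m < μ.ord ∧ x ∈ cstR μ T G m m := by
    intro x
    by_cases h : x ∈ T
    · obtain ⟨m, h1, h2⟩ := cstR_exists hμ hT hG _ x h rfl
      exact ⟨m, fun _ => ⟨h1, h2⟩⟩
    · exact ⟨0, fun h' => absurd h' h⟩
  choose m hm using hex
  let K : PFn X → Set Ordinal.{0} := fun x => cstK μ T G (m x) x (m x)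
  let τ : PFn X → Ordinal.{1} := fun x => Ordinal.type (fun p q : K x => p < q)
  have hτ : ∀ x ∈ T, τ x < Ordinal.lift.{1} μ.ord := by
    intro x hx
    rw [Cardinal.lift_ord, Cardinal.lt_ord, Ordinal.card_type]
    exact cstK_card hμ hT hG hG2 hx (hm x hx).1 (hm x hx).1
  have hlt : ∀ x ∈ T, ∀ y ∈ T, m x = m y → pLT x y → τ x < τ y := by
    intro x hx y hy he hxy
    have hd := cst_lt_dom hT hx hy hxy
    have hr := cst_le_restrict hT hx hxy.1
    have hKx : K x = K y ∩ Iic (pDom x) := by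
      ext ξ
      simp only [K, cstK, Set.mem_inter_iff, Set.mem_Iic]
      constructor
      · rintro ⟨h1, h2⟩
        refine ⟨⟨h1.trans hd.le, ?_⟩, h1⟩
        rw [← hr, cst_restrict_restrict _ h1, hr, he] at h2
        exact h2
      · rintro ⟨⟨h1, h2⟩, h3⟩
        refine ⟨h3, ?_⟩
        rw [← hr, cst_restrict_restrict _ h3, hr, he]
        exact h2
    have hyK : pDom y ∈ K y := ⟨le_rfl, by
      rw [cst_restrict_dom hT hy]; exact (hm y hy).2⟩
    have h1 : Ordinal.type (fun p q : (K y ∩ Iio (pDom y) : Set _) => p < q) < τ y :=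
      cst_type_lt _ _ _ hyK rfl
    refine lt_of_le_of_lt ?_ h1
    rw [Ordinal.type_le_iff']
    refine ⟨⟨⟨fun p => ⟨p.1, ?_⟩, fun p q he => Subtype.ext (by simpa using he)⟩, Iff.rfl⟩⟩
    have := hKx.subset p.2
    exact ⟨this.1, lt_of_le_of_lt this.2 hd⟩
  let Fm : (Iio μ.ord) × (Iio (Ordinal.lift.{1} μ.ord)) → Set (PFn X) :=
    fun p => {x ∈ T | m x = p.1.1 ∧ τ x = p.2.1}
  refine ⟨fun x => pRestrict x 0, ?_, ?_⟩
  · intro x hx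
    refine ⟨hT.2.1 x hx 0, ?_⟩
    rintro ⟨y, hy, hyx⟩
    have := cst_restrict_lt hT hx (lt_of_le_of_lt bot_le (cst_lt_dom hT hy hx hyx)) le_rfl
    rwa [cst_restrict_dom hT hx] at this
  · intro z
    refine ⟨Set.range Fm, ?_, ?_, ?_⟩
    · have h1 := Cardinal.mk_range_le_lift (f := Fm)
      rw [Cardinal.mk_prod, Cardinal.mk_Iio_ordinal, Cardinal.mk_Iio_ordinal, ← Ordinal.lift_card,
        Cardinal.card_ord] at h1
      simp only [Cardinal.lift_lift, Cardinal.lift_mul] at h1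
      rw [Cardinal.mul_eq_self (by simpa using hμ)] at h1
      have h2 : Cardinal.lift.{max 1 2 u} μ < Cardinal.lift.{max 1 2 u} (Order.succ μ) := by
        rw [Cardinal.lift_lt]; exact Order.lt_succ μ
      rw [← Cardinal.lift_lt.{max 1 u, 2}, Cardinal.lift_lift]
      exact lt_of_le_of_lt h1 h2
    · rintro A ⟨p, rfl⟩
      refine ⟨fun x hx => hx.1, ?_⟩
      rintro a ⟨ha, ha1, ha2⟩ c ⟨hc, hc1, hc2⟩ -
      constructor
      · intro h
        exact absurd (hlt a ha c hc (ha1.trans hc1.symm) h) (by rw [ha2, hc2]; exact lt_irrefl _)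
      · intro h
        exact absurd (hlt c hc a ha (hc1.trans ha1.symm) h) (by rw [ha2, hc2]; exact lt_irrefl _)
    · rintro x ⟨hx, -⟩
      exact ⟨_, ⟨⟨⟨m x, (hm x hx).1⟩, ⟨τ x, hτ x hx⟩⟩, rfl⟩, hx, rfl, rfl⟩



theorem cst_inj (hμ : ℵ₀ ≤ μ) (hT : StreamKTree (Order.succ μ) T) {β c : Ordinal.{0}}
    (hβ : β < (Order.succ μ).ord) (hc : c < (Order.succ μ).ord) :
    ∃ e : PFn X × Ordinal.{0} → Ordinal.{0},
      (∀ p, e p < μ.ord) ∧ Set.InjOn e {p | p.1 ∈ T ∧ pDom p.1 = β ∧ p.2 ≤ c} := by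
  set Z : Set (PFn X × Ordinal.{0}) := {p | p.1 ∈ T ∧ pDom p.1 = β ∧ p.2 ≤ c} with hZ
  have hc' : Order.succ c < (Order.succ μ).ord :=
    (Cardinal.isSuccLimit_ord (hμ.trans (Order.le_succ μ))).succ_lt hc
  have hZ1 : Z ⊆ {t ∈ T | pDom t = β} ×ˢ Iio (Order.succ c) := by
    rintro p ⟨h1, h2, h3⟩
    exact ⟨⟨h1, h2⟩, Order.lt_succ_iff.2 h3⟩
  have hA : #{t ∈ T | pDom t = β} ≤ Cardinal.lift.{max 1 u} μ := by
    have := hT.2.2.2.2 β hβ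
    rwa [Cardinal.lift_succ, Order.lt_succ_iff] at this
  have hB : #(Iio (Order.succ c)) ≤ Cardinal.lift.{1} μ := by
    rw [Cardinal.mk_Iio_ordinal, Cardinal.lift_le, ← Order.lt_succ_iff]
    exact Cardinal.lt_ord.1 hc'
  have hZc : #Z ≤ Cardinal.lift.{max 1 u} μ := by
    refine (Cardinal.mk_le_mk_of_subset hZ1).trans ?_
    have hB' := Cardinal.lift_le.{max 1 u}.2 hB
    rw [Cardinal.lift_lift] at hB'
    have h4 : #({t ∈ T | pDom t = β} ×ˢ Iio (Order.succ c) : Set (PFn X × Ordinal.{0})) =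
        Cardinal.lift.{1} #{t ∈ T | pDom t = β} *
          Cardinal.lift.{max 1 u} #(Iio (Order.succ c)) := by
      rw [Cardinal.mk_congr (Equiv.Set.prod _ _), Cardinal.mk_prod]
    rw [h4]
    refine (mul_le_mul' (Cardinal.lift_le.2 hA) hB').trans ?_
    rw [Cardinal.lift_lift]
    exact (Cardinal.mul_eq_self (by simpa using hμ)).le
  have hne : 0 < μ.ord := by
    rw [Cardinal.lt_ord]; simpa using lt_of_lt_of_le Cardinal.aleph0_pos hμ
  have h5 : Cardinal.lift.{1} #Z ≤ Cardinal.lift.{max 1 u} #(Iio μ.ord) := by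
    rw [Cardinal.mk_Iio_ordinal, Cardinal.card_ord, Cardinal.lift_lift]
    have := Cardinal.lift_le.{1}.2 hZc
    rwa [Cardinal.lift_lift] at this
  obtain ⟨f⟩ := Cardinal.lift_mk_le'.1 h5
  classical
  refine ⟨fun p => if h : p ∈ Z then (f ⟨p, h⟩).1 else 0, ?_, ?_⟩
  · intro p
    dsimp only
    split_ifs with h
    · exact (f ⟨p, h⟩).2
    · exact hne
  · intro p hp q hq he
    simp only [dif_pos hp, dif_pos hq] at he
    exact congrArg Subtype.val (f.injective (Subtype.ext he))

theorem cst_G (hμ : ℵ₀ ≤ μ) (hT : StreamKTree (Order.succ μ) T)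
    (hcoh : SCoherent (ECof (Order.succ μ).ord μ.ord.cof) T)
    (D : Set Ordinal.{0}) (hD : IsClubIn D (Order.succ μ).ord)
    (b : Ordinal.{0} → PFn X)
    (hb : ∀ δ ∈ D ∩ ECof (Order.succ μ).ord μ.ord.cof, b δ ∈ T ∧ pDom (b δ) = δ)
    (d : PFn X → Ordinal.{0})
    (hd1 : ∀ δ ∈ D ∩ ECof (Order.succ μ).ord μ.ord.cof, d (b δ) < δ)
    (hd2 : ∀ γ ∈ D ∩ ECof (Order.succ μ).ord μ.ord.cof,
      ∀ δ ∈ D ∩ ECof (Order.succ μ).ord μ.ord.cof,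
        pLT (b γ) (b δ) → d (b γ) ≠ d (b δ)) :
    ∃ G : PFn X → Ordinal.{0} × Ordinal.{0},
    (∀ x ∈ T, (pDom x).cof = μ.ord.cof → (G x).1 < pDom x ∧ (G x).2 < μ.ord) ∧
    (∀ x ∈ T, ∀ y ∈ T, (pDom x).cof = μ.ord.cof → (pDom y).cof = μ.ord.cof →
      pLT x y → G x ≠ G y) := by
  have hcb : ∀ β : Ordinal.{0}, ∃ c, β < (Order.succ μ).ord →
      c < (Order.succ μ).ord ∧ c ∈ D ∧ β < c := by
    intro β
    by_cases h : β < (Order.succ μ).ord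
    · obtain ⟨c, h1, h2⟩ := hD.2.2 β h
      exact ⟨c, fun _ => ⟨hD.1 h1, h1, h2⟩⟩
    · exact ⟨0, fun h' => absurd h' h⟩
  choose c hc using hcb
  have hee : ∀ β : Ordinal.{0}, ∃ e : PFn X × Ordinal.{0} → Ordinal.{0},
      β < (Order.succ μ).ord →
      (∀ p, e p < μ.ord) ∧ Set.InjOn e {p | p.1 ∈ T ∧ pDom p.1 = β ∧ p.2 ≤ c β} := by
    intro β
    by_cases h : β < (Order.succ μ).ord
    · obtain ⟨e, he⟩ := cst_inj hμ hT h (hc β h).1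
      exact ⟨e, fun _ => he⟩
    · exact ⟨fun _ => 0, fun h' => absurd h' h⟩
  choose e he using hee
  have hlim : ∀ α : Ordinal.{0}, α.cof = μ.ord.cof → Order.IsSuccLimit α := by
    intro α h
    rw [← Ordinal.one_lt_cof_iff, h, Ordinal.one_lt_cof_iff]
    exact Cardinal.isSuccLimit_ord hμ
  have hex : ∀ x, ∃ q : Ordinal.{0} × (PFn X × Ordinal.{0}), x ∈ T →
      (pDom x).cof = μ.ord.cof →
      q.1 < pDom x ∧ q.2 ∈ {p : PFn X × Ordinal.{0} | p.1 ∈ T ∧ pDom p.1 = q.1 ∧ p.2 ≤ c q.1} ∧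
      ((pDom x ∈ D ∧ q.2.1 = pRestrict (b (pDom x)) q.1 ∧ q.2.2 = d (b (pDom x)) ∧
        q.2.2 < q.1 ∧ ∀ γ, q.1 ≤ γ → γ < pDom x → x γ = b (pDom x) γ) ∨
       (pDom x ∉ D ∧ q.2.2 = pDom x)) := by
    intro x
    by_cases hx : x ∈ T
    swap
    · exact ⟨(0, x, 0), fun h' => absurd h' hx⟩
    by_cases hcf : (pDom x).cof = μ.ord.cof
    swap
    · exact ⟨(0, x, 0), fun _ h' => absurd h' hcf⟩
    have hxκ := hT.2.2.1 x hx
    have hL := hlim _ hcf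
    by_cases hxD : pDom x ∈ D
    · have hm : pDom x ∈ D ∩ ECof (Order.succ μ).ord μ.ord.cof := ⟨hxD, hxκ, hcf⟩
      obtain ⟨hbT, hbd⟩ := hb _ hm
      have hs := hcoh _ hm.2 x hx _ hbT rfl hbd
      set σ := sSup {γ : Ordinal.{0} | γ < pDom x ∧ x γ ≠ b (pDom x) γ} with hσ
      have hlt : max (Order.succ σ) (Order.succ (d (b (pDom x)))) < pDom x :=
        max_lt (hL.succ_lt hs) (hL.succ_lt (hd1 _ hm))
      refine ⟨(max (Order.succ σ) (Order.succ (d (b (pDom x)))),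
        pRestrict (b (pDom x)) (max (Order.succ σ) (Order.succ (d (b (pDom x))))),
        d (b (pDom x))), fun _ _ => ⟨hlt, ⟨hT.2.1 _ hbT _, ?_, ?_⟩, Or.inl ⟨hxD, rfl, rfl, ?_, ?_⟩⟩⟩
      · exact cst_dom_restrict hT hbT (hlt.le.trans hbd.ge)
      · exact ((Order.lt_succ _).le.trans (le_max_right _ _)).trans (hc _ (hlt.trans hxκ)).2.2.le
      · exact lt_of_lt_of_le (Order.lt_succ _) (le_max_right _ _)
      · intro γ h1 h2
        by_contra hne
        have : γ ≤ σ := le_csSup ⟨pDom x, fun z hz => hz.1.le⟩ ⟨h2, hne⟩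
        exact absurd (lt_of_lt_of_le (Order.lt_succ σ) ((le_max_left _ _).trans h1)) (not_lt.2 this)
    · have hle : sSup (D ∩ Iio (pDom x)) ≤ pDom x := csSup_le' fun z hz => (le_of_lt hz.2)
      have h0 : 0 < pDom x := hL.bot_lt
      have hlt : sSup (D ∩ Iio (pDom x)) < pDom x :=
        lt_of_le_of_ne hle fun h => hxD (hD.2.1 _ hxκ h0 h)
      refine ⟨(sSup (D ∩ Iio (pDom x)), pRestrict x (sSup (D ∩ Iio (pDom x))), pDom x),
        fun _ _ => ⟨hlt, ⟨hT.2.1 _ hx _, cst_dom_restrict hT hx hle, ?_⟩, Or.inr ⟨hxD, rfl⟩⟩⟩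
      by_contra hn
      have hcc := hc _ (hlt.trans hxκ)
      have : c (sSup (D ∩ Iio (pDom x))) ≤ sSup (D ∩ Iio (pDom x)) :=
        le_csSup ⟨pDom x, fun z hz => (le_of_lt hz.2)⟩ ⟨hcc.2.1, not_le.1 hn⟩
      exact absurd hcc.2.2 (not_lt.2 this)
  choose q hq using hex
  refine ⟨fun x => ((q x).1, e (q x).1 (q x).2), ?_, ?_⟩
  · intro x hx hcf
    have h := hq x hx hcf
    exact ⟨h.1, (he _ (h.1.trans (hT.2.2.1 x hx))).1 _⟩
  · intro x hx y hy hcx hcy hxy hEq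
    obtain ⟨hx1, hx2, hx3⟩ := hq x hx hcx
    obtain ⟨hy1, hy2, hy3⟩ := hq y hy hcy
    have hd := cst_lt_dom hT hx hy hxy
    obtain ⟨h1, h2⟩ := Prod.mk.inj hEq
    have hq2 : (q x).2 = (q y).2 := by
      rw [← h1] at h2 hy2
      exact (he _ (hx1.trans (hT.2.2.1 x hx))).2 hx2 hy2 h2
    rcases hx3 with ⟨a1, a2, a3, a4, a5⟩ | ⟨a1, a2⟩
    · rcases hy3 with ⟨b1, b2, b3, b4, b5⟩ | ⟨b1, b2⟩
      · have mx : pDom x ∈ D ∩ ECof (Order.succ μ).ord μ.ord.cof := ⟨a1, hT.2.2.1 x hx, hcx⟩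
        have my : pDom y ∈ D ∩ ECof (Order.succ μ).ord μ.ord.cof := ⟨b1, hT.2.2.1 y hy, hcy⟩
        refine hd2 _ mx _ my ⟨?_, ?_⟩ ?_
        · intro γ v hv
          have hγ : γ < pDom x := by
            by_contra hn
            rw [cst_none hT (hb _ mx).1 ((hb _ mx).2.le.trans (not_lt.1 hn))] at hv
            cases hv
          by_cases hγβ : γ < (q x).1
          · have h3 : pRestrict (b (pDom x)) (q x).1 γ = pRestrict (b (pDom y)) (q x).1 γ := by
              rw [← a2, hq2, b2, h1]
            simp only [pRestrict, if_pos hγβ] at h3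
            rw [← h3, hv]
          · have hγβ := not_lt.1 hγβ
            rw [← b5 γ (h1 ▸ hγβ) (hγ.trans hd), cst_le_eq hT hx hxy.1 hγ, a5 γ hγβ hγ, hv]
        · intro hbb
          have := congrArg pDom hbb
          rw [(hb _ mx).2, (hb _ my).2] at this
          exact hd.ne this
        · rw [← a3, ← b3, hq2]
      · rw [hq2, b2] at a4
        exact absurd (a4.trans (h1 ▸ hy1)) (lt_irrefl _)
    · rcases hy3 with ⟨b1, b2, b3, b4, b5⟩ | ⟨b1, b2⟩
      · rw [← hq2, a2, ← h1] at b4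
        exact absurd (b4.trans hx1) (lt_irrefl _)
      · rw [hq2, b2] at a2
        exact hd.ne a2.symm

end cst

/-- Lemma 2.7: if `T` is an `E^{μ⁺}_{cf μ}`-coherent streamlined `μ⁺`-tree, and
`d` is a function defined on nodes `b_δ ∈ T_δ` for `δ ∈ D ∩ E^{μ⁺}_{cf μ}` (`D` a
club) with `d(b_δ) < δ` which is injective on chains, then `T` is special. -/
theorem coherent_tree_special {X : Type u}
    (μ : Cardinal.{0}) (hμ : ℵ₀ ≤ μ)
    (T : Set (PFn X)) (hT : StreamKTree (Order.succ μ) T)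
    (hcoh : SCoherent (ECof (Order.succ μ).ord μ.ord.cof) T)
    (D : Set Ordinal.{0}) (hD : IsClubIn D (Order.succ μ).ord)
    (b : Ordinal.{0} → PFn X)
    (hb : ∀ δ ∈ D ∩ ECof (Order.succ μ).ord μ.ord.cof, b δ ∈ T ∧ pDom (b δ) = δ)
    (d : PFn X → Ordinal.{0})
    (hd1 : ∀ δ ∈ D ∩ ECof (Order.succ μ).ord μ.ord.cof, d (b δ) < δ)
    (hd2 : ∀ γ ∈ D ∩ ECof (Order.succ μ).ord μ.ord.cof,
      ∀ δ ∈ D ∩ ECof (Order.succ μ).ord μ.ord.cof,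
        pLT (b γ) (b δ) → d (b γ) ≠ d (b δ)) :
    SpecialOn (Order.succ μ) T pLT := by
  obtain ⟨G, hG, hG2⟩ := cst_G hμ hT hcoh D hD b hb d hd1 hd2
  exact cst_main hμ hT hG hG2

end
end

section
/- Let κ be a regular uncountable cardinal and θ < κ a cardinal. Suppose c : [κ]² → θ is a colouring witnessing U(κ,2,θ,3). Then for every Υ ⊆ κ of size κ, the set {δ < κ | sup{c(δ,υ) | υ ∈ Υ, δ < υ} < θ} is bounded below κ. -/
open Set Cardinal Ordinal

noncomputable section

/-- `c` is a witness to the principle `U(κ,λ,θ,χ)`: for every cardinal `ζ < χ`,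
every `κ`-sized pairwise disjoint family `A` of `ζ`-sized subsets of `κ`, and every
colour `τ < θ`, there is a subfamily `B ⊆ A` of size `λ` such that `c(α,β) > τ`
whenever `α ∈ a`, `β ∈ b`, `α < β` for distinct `a, b ∈ B`.
(The colouring `c : [κ]² → θ` is represented by a two-variable function, evaluated
on pairs `α < β`.) -/
def UWitness (κ lam θ χ : Cardinal.{0}) (c : Ordinal → Ordinal → Ordinal) : Prop :=
  ∀ ζ : Cardinal.{0}, ζ < χ →
    ∀ A : Set (Set Ordinal),
      (∀ a ∈ A, a ⊆ Iio κ.ord ∧ #a = Cardinal.lift.{1} ζ) →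
      A.PairwiseDisjoint id →
      #A = Cardinal.lift.{1} κ →
      ∀ τ : Ordinal, τ < θ.ord →
        ∃ B ⊆ A, #B = Cardinal.lift.{1} lam ∧
          ∀ a ∈ B, ∀ b ∈ B, a ≠ b → ∀ α ∈ a, ∀ β ∈ b, α < β → τ < c α β

/-- Small subsets of a regular cardinal are bounded. -/
theorem bounded_of_small {κ : Cardinal.{0}} (hκ : κ.IsRegular) {s : Set Ordinal.{0}}
    (hs : s ⊆ Iio κ.ord) (hc : #s < Cardinal.lift.{1} κ) :
    ∃ ε < κ.ord, ∀ x ∈ s, x ≤ ε := by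
  refine ⟨sSup s, Ordinal.sSup_lt_of_lt_cof ?_ hs, fun x hx => le_csSup ⟨κ.ord, ?_⟩ hx⟩
  · rw [← Ordinal.lift_cof, hκ.cof_ord]
    exact hc
  · exact fun y hy => (hs hy).le

/-- Subsets of full size are unbounded. -/
theorem unbounded_of_card {κ : Cardinal.{0}} (hκ : κ.IsRegular) {s : Set Ordinal.{0}}
    (hc : #s = Cardinal.lift.{1} κ) (ε : Ordinal.{0}) (hε : ε < κ.ord) :
    ∃ x ∈ s, ε < x := by
  by_contra! h
  have h1 : s ⊆ Iio (Order.succ ε) := fun x hx => Order.lt_succ_of_le (h x hx)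
  have h2 := Cardinal.mk_le_mk_of_subset h1
  rw [hc, Cardinal.mk_Iio_ordinal, Cardinal.lift_le] at h2
  have h3 : Order.succ ε < κ.ord :=
    (Cardinal.isSuccLimit_ord hκ.aleph0_le).succ_lt hε
  exact absurd (Cardinal.lt_ord.1 h3) (not_lt.2 h2)

/-- The family of candidate pairs. -/
def pairFam (κ : Cardinal.{0}) (D Y : Set Ordinal.{0}) : Set (Set Ordinal.{0}) :=
  {a | ∃ δ ∈ D, ∃ υ ∈ Y, δ < υ ∧ υ < κ.ord ∧ a = {δ, υ}}

theorem exists_disjoint_pairs {κ : Cardinal.{0}} (hκ : κ.IsRegular) {D Y : Set Ordinal.{0}}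
    (hD : ∀ ε < κ.ord, ∃ x ∈ D, x < κ.ord ∧ ε < x)
    (hY : ∀ ε < κ.ord, ∃ x ∈ Y, x < κ.ord ∧ ε < x) :
    ∃ A ⊆ pairFam κ D Y, A.PairwiseDisjoint id ∧ #A = Cardinal.lift.{1} κ := by
  obtain ⟨M, hM⟩ := zorn_subset {A | A ⊆ pairFam κ D Y ∧ A.PairwiseDisjoint id} (by
    intro C hC hchain
    refine ⟨⋃₀ C, ⟨sUnion_subset fun s hs => (hC hs).1, ?_⟩, fun s hs => subset_sUnion_of_mem hs⟩
    exact (hchain.pairwiseDisjoint_sUnion id).2 fun s hs => (hC hs).2)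
  have hbig : Cardinal.lift.{1} κ ≤ #M := by
    by_contra! hlt
    have hb : ∀ a : M, ∃ υ < κ.ord, ∀ x ∈ a.1, x ≤ υ := by
      rintro ⟨a, ha⟩
      obtain ⟨δ, -, υ, -, h1, h2, rfl⟩ := hM.prop.1 ha
      refine ⟨υ, h2, ?_⟩
      rintro x (rfl | rfl)
      · exact h1.le
      · exact le_rfl
    choose g hg hg' using hb
    obtain ⟨ε, hε, hε'⟩ := bounded_of_small hκ (s := range g)
      (by rintro _ ⟨a, rfl⟩; exact hg a) (Cardinal.mk_range_le.trans_lt hlt)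
    obtain ⟨δ, hδ, hδκ, hεδ⟩ := hD ε hε
    obtain ⟨υ, hυ, hυκ, hδυ⟩ := hY δ hδκ
    have hle : ∀ a ∈ M, ∀ x ∈ a, x ≤ ε := fun a ha x hx =>
      (hg' ⟨a, ha⟩ x hx).trans (hε' _ ⟨_, rfl⟩)
    have hins : insert ({δ, υ} : Set Ordinal.{0}) M ∈
        {A | A ⊆ pairFam κ D Y ∧ A.PairwiseDisjoint id} := by
      refine ⟨insert_subset ⟨δ, hδ, υ, hυ, hδυ, hυκ, rfl⟩ hM.prop.1, ?_⟩
      refine hM.prop.2.insert fun j hj _ => ?_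
      simp only [id]
      rw [Set.disjoint_left]
      rintro x (rfl | rfl) hx
      · exact absurd (hle j hj _ hx) (not_le.2 hεδ)
      · exact absurd (hle j hj _ hx) (not_le.2 (hεδ.trans hδυ))
    have hmem : ({δ, υ} : Set Ordinal.{0}) ∈ M :=
      hM.le_of_ge hins (subset_insert _ _) (mem_insert _ _)
    exact absurd (hle _ hmem δ (by simp)) (not_le.2 hεδ)
  obtain ⟨A, hAM, hA⟩ := Cardinal.le_mk_iff_exists_subset.1 hbig
  exact ⟨A, hAM.trans hM.prop.1, hM.prop.2.subset hAM, hA⟩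

/-- Proposition 3.5: if `θ < κ` and `c : [κ]² → θ` witnesses `U(κ,2,θ,3)`, then for
every `Υ ⊆ κ` of size `κ`, the set of `δ < κ` for which
`sup { c(δ,υ) | υ ∈ Υ ∖ (δ+1) } < θ` is bounded below `κ`. -/
theorem U_bounded_fibers (κ θ : Cardinal.{0}) (hκreg : κ.IsRegular) (hκunc : ℵ₀ < κ)
    (hθ : θ < κ)
    (c : Ordinal → Ordinal → Ordinal)
    (hrange : ∀ α β : Ordinal, α < β → β < κ.ord → c α β < θ.ord)
    (hU : UWitness κ 2 θ 3 c) :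
    ∀ Υ : Set Ordinal, Υ ⊆ Iio κ.ord → #Υ = Cardinal.lift.{1} κ →
      ∃ ε < κ.ord, ∀ δ, δ < κ.ord →
        sSup {x : Ordinal | ∃ υ ∈ Υ, δ < υ ∧ x = c δ υ} < θ.ord → δ ≤ ε := by
  intro Υ hΥ hcard
  by_contra! hcon
  -- the fibre sets
  have hbd : ∀ δ, sSup {x : Ordinal | ∃ υ ∈ Υ, δ < υ ∧ x = c δ υ} < θ.ord →
      ∀ υ ∈ Υ, δ < υ → c δ υ ≤ sSup {x : Ordinal | ∃ υ ∈ Υ, δ < υ ∧ x = c δ υ} := by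
    intro δ _ υ hυ hδυ
    refine le_csSup ⟨θ.ord, ?_⟩ ⟨υ, hυ, hδυ, rfl⟩
    rintro x ⟨υ', h1, h2, rfl⟩
    exact (hrange _ _ h2 (hΥ h1)).le
  have hτ : ∃ τ < θ.ord, ∀ ε < κ.ord,
      ∃ x ∈ {δ | ∀ υ ∈ Υ, δ < υ → c δ υ ≤ τ}, x < κ.ord ∧ ε < x := by
    by_contra! h
    have h' : ∀ τ : Iio θ.ord, ∃ ε < κ.ord,
      ∀ x ∈ {δ | ∀ υ ∈ Υ, δ < υ → c δ υ ≤ τ.1}, x < κ.ord → x ≤ ε := fun τ => h τ.1 τ.2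
    choose g hg hg' using h'
    obtain ⟨ε, hε, hε'⟩ := bounded_of_small hκreg (s := range g)
      (by rintro _ ⟨a, rfl⟩; exact hg a) (Cardinal.mk_range_le.trans_lt (by
        rw [Cardinal.mk_Iio_ordinal, Cardinal.card_ord, Cardinal.lift_lt]
        exact hθ))
    obtain ⟨δ, hδ, hs, hεδ⟩ := hcon ε hε
    exact absurd ((hg' ⟨_, hs⟩ δ (hbd δ hs) hδ).trans (hε' _ ⟨_, rfl⟩)) (not_le.2 hεδ)
  obtain ⟨τ, hτθ, hD⟩ := hτ
  obtain ⟨A, hAP, hAd, hAc⟩ := exists_disjoint_pairs hκreg hD (Y := Υ) (by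
    intro ε hε
    obtain ⟨x, hx, h⟩ := unbounded_of_card hκreg hcard ε hε
    exact ⟨x, hx, hΥ hx, h⟩)
  obtain ⟨B, hBA, hB2, hB⟩ := hU 2 (by exact_mod_cast (by norm_num : (2 : ℕ) < 3)) A (by
    intro a ha
    obtain ⟨δ, -, υ, -, h1, h2, rfl⟩ := hAP ha
    refine ⟨?_, ?_⟩
    · rintro x (rfl | rfl)
      · exact h1.trans h2
      · exact h2
    · rw [Cardinal.mk_insert (by simpa using h1.ne), Cardinal.mk_singleton, Cardinal.lift_ofNat]
      exact one_add_one_eq_two) hAd hAc τ hτθ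
  rw [Cardinal.lift_ofNat, Cardinal.mk_eq_two_iff] at hB2
  obtain ⟨⟨a, ha⟩, ⟨b, hb⟩, hab, -⟩ := hB2
  have hab' : a ≠ b := fun h => hab (Subtype.ext h)
  have hdis := hAd (hBA ha) (hBA hb) hab'
  obtain ⟨δ, hδ, υ, hυ, h1, h2, ea⟩ := hAP (hBA ha)
  obtain ⟨δ', hδ', υ', hυ', h1', h2', eb⟩ := hAP (hBA hb)
  have m1 : δ ∈ a := by simp [ea]
  have m2 : υ ∈ a := by simp [ea]
  have m1' : δ' ∈ b := by simp [eb]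
  have m2' : υ' ∈ b := by simp [eb]
  rcases lt_trichotomy δ δ' with h | h | h
  · exact absurd (hδ υ' hυ' (h.trans h1'))
      (not_le.2 (hB a ha b hb hab' δ m1 υ' m2' (h.trans h1')))
  · exact Set.disjoint_left.1 hdis m1 (h ▸ m1')
  · exact absurd (hδ' υ hυ (h.trans h1))
      (not_le.2 (hB b hb a ha hab'.symm δ' m1' υ m2 (h.trans h1)))

end
end

section
/- For every positive integer n there exist a positive integer b and a function h : ℕ → {0,1} such that for every function p : {0,…,n−1} → ℕ and every l ∈ {0,1}, there exists i < b such that h((p(k)+i) mod b) = l for every k < n. -/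
theorem avoid_aux (n m : ℕ) (hm : n < m) (p : Fin n → ℕ) : ∃ a : ℕ, ∀ k, ¬ m ∣ p k + a := by
  by_contra! hc
  choose f hf using hc
  obtain ⟨x, y, hxy, he⟩ := Fintype.exists_ne_map_eq_of_card_lt
    (fun x : Fin m => f x.1) (by simpa using hm)
  apply hxy
  have h1 := hf x.1
  have h2 := hf y.1
  rw [he] at h1
  have h3 : p (f y.1) + x.1 ≡ p (f y.1) + y.1 [MOD m] :=
    ((Nat.modEq_zero_iff_dvd).2 h1).trans ((Nat.modEq_zero_iff_dvd).2 h2).symm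
  have h4 := Nat.ModEq.add_left_cancel' _ h3
  exact Fin.ext (h4.eq_of_lt_of_lt x.2 y.2)

theorem hit_aux (m q : ℕ) (hm : 0 < m) : ∃ a : ℕ, m ∣ q + a := by
  refine ⟨q * (m - 1), q, ?_⟩
  obtain ⟨r, rfl⟩ : ∃ r, m = r + 1 := ⟨m - 1, by omega⟩
  simp only [Nat.add_sub_cancel]
  ring

/-- Lemma 3.6 ("twocolours"): for every positive integer `n` there are a positive
integer `b` and a map `h : ℕ → 2` such that for every `p : n → ℕ` and every colour
`l < 2`, there is an `i < b` with `h ((p k + i) % b) = l` for every `k < n`. -/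
theorem twocolours (n : ℕ) (hn : 0 < n) :
    ∃ b : ℕ, 0 < b ∧ ∃ h : ℕ → Fin 2,
      ∀ p : Fin n → ℕ, ∀ l : Fin 2,
        ∃ i < b, ∀ k : Fin n, h ((p k + i) % b) = l := by
  classical
  let m : Fin n → ℕ := fun j => Nat.nth Nat.Prime (n + j)
  have hprime : ∀ j, (m j).Prime := fun j => Nat.prime_nth_prime _
  have hlt : ∀ j, n < m j := fun j => by
    have := Nat.add_two_le_nth_prime (n + j)
    simp only [m]
    omega
  have hcop : Set.Pairwise (↑(Finset.univ : Finset (Fin n))) (Function.onFun Nat.Coprime m) := by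
    intro i _ j _ hij
    refine (Nat.coprime_primes (hprime i) (hprime j)).2 fun h => hij ?_
    have := Nat.nth_injective Nat.infinite_setOfPred_prime h
    exact Fin.ext (by omega)
  let b := ∏ j, m j
  have hb : 0 < b := Finset.prod_pos fun j _ => (hprime j).pos
  have hdvd : ∀ j, m j ∣ b := fun j => Finset.dvd_prod_of_mem m (Finset.mem_univ j)
  have key : ∀ a : Fin n → ℕ, ∃ i < b, ∀ j q, m j ∣ (q + i) % b ↔ m j ∣ q + a j := by
    intro a
    obtain ⟨c, hc⟩ := Nat.chineseRemainderOfFinset a m Finset.univ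
      (fun j _ => (hprime j).ne_zero) hcop
    refine ⟨c % b, Nat.mod_lt _ hb, fun j q => ?_⟩
    rw [Nat.dvd_mod_iff (hdvd j)]
    have h1 : c % b ≡ a j [MOD m j] :=
      ((Nat.mod_modEq c b).of_dvd (hdvd j)).trans (hc j (Finset.mem_univ j))
    exact (h1.add_left q).dvd_iff dvd_rfl
  refine ⟨b, hb, fun x => if ∃ j, m j ∣ x then 1 else 0, fun p l => ?_⟩
  by_cases hl : l = 1
  · choose a ha using fun j => hit_aux (m j) (p j) (hprime j).pos
    obtain ⟨i, hi, H⟩ := key a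
    refine ⟨i, hi, fun k => ?_⟩
    have hk : ∃ j, m j ∣ (p k + i) % b := ⟨k, (H k _).2 (ha k)⟩
    beta_reduce
    rw [if_pos hk, hl]
  · choose a ha using fun j => avoid_aux n (m j) (hlt j) p
    obtain ⟨i, hi, H⟩ := key a
    refine ⟨i, hi, fun k => ?_⟩
    beta_reduce
    rw [if_neg]
    · omega
    · rintro ⟨j, hj⟩
      exact ha j k ((H j _).1 hj)
end

section
/- For every positive integer n there exists a function g : ℕ → ℕ such that for every l ∈ ℕ there exists m ∈ ℕ such that for every function p : {0,…,n−1} → ℕ there exists i < m with g(p(k)+i) = l for every k < n. -/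
theorem avoid_residue (n q : ℕ) (hq : n < q) (p : Fin n → ℕ) :
    ∃ a : ℕ, ∀ k, ¬ q ∣ p k + a := by
  by_contra! h
  choose f hf using h
  have hinj : Function.Injective (fun a : Fin q => f a) := by
    intro a b hab
    have h1 := hf a
    have h2 := hf b
    simp only at hab
    rw [hab] at h1
    have h3 : p (f b) + (a : ℕ) ≡ p (f b) + b [MOD q] :=
      ((Nat.modEq_zero_iff_dvd).2 h1).trans ((Nat.modEq_zero_iff_dvd).2 h2).symm
    have h4 := Nat.ModEq.add_left_cancel' _ h3
    exact Fin.ext (Nat.ModEq.eq_of_lt_of_lt h4 a.2 b.2)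
  have := Fintype.card_le_of_injective _ hinj
  simp at this
  omega

/-- Lemma 3.7 ("intermediate"): for every positive integer `n` there is a function
`g : ℕ → ℕ` such that for every `l < ω` there is an `m < ω` such that for every
`p : n → ℕ` there is an `i < m` with `g (p k + i) = l` for every `k < n`. -/
theorem intermediate (n : ℕ) (hn : 0 < n) :
    ∃ g : ℕ → ℕ, ∀ l : ℕ, ∃ m : ℕ, ∀ p : Fin n → ℕ,
      ∃ i < m, ∀ k : Fin n, g (p k + i) = l := by
  classical
  let q : ℕ → ℕ := fun j => Nat.nth Nat.Prime (n + j)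
  have hqp : ∀ j, (q j).Prime := fun j => Nat.prime_nth_prime _
  have hqn : ∀ j, n < q j := fun j => by
    have := Nat.add_two_le_nth_prime (n + j)
    show n < Nat.nth Nat.Prime (n + j)
    omega
  have hcop : ∀ i j, i ≠ j → Nat.Coprime (q i) (q j) := by
    intro i j hij
    rw [Nat.coprime_primes (hqp i) (hqp j)]
    intro h
    have := Nat.nth_injective Nat.infinite_setOf_prime h
    omega
  refine ⟨fun x => if h : ∃ j, q j ∣ x then Nat.find h / n else 0, fun l =>
    ⟨∏ j ∈ Finset.range (l * n + n), q j, fun p => ?_⟩⟩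
  have key : ∀ j, ∃ a : ℕ, (j < l * n → ∀ k, ¬ q j ∣ p k + a) ∧
      (∀ k : Fin n, j = l * n + k → q j ∣ p k + a) := by
    intro j
    by_cases hj : j < l * n
    · obtain ⟨a, ha⟩ := avoid_residue n (q j) (hqn j) p
      exact ⟨a, fun _ => ha, fun k hk => by omega⟩
    · by_cases hk : ∃ k : Fin n, j = l * n + k
      · obtain ⟨k, hk⟩ := hk
        refine ⟨p k * (q j - 1), fun h => absurd h hj, fun k' hk' => ?_⟩
        have : k' = k := Fin.ext (by omega)
        subst this
        refine ⟨p k', ?_⟩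
        obtain ⟨c, hc⟩ : ∃ c, q j = c + 1 := ⟨q j - 1, by have := hqn j; omega⟩
        rw [hc]
        simp
        ring
      · exact ⟨0, fun h => absurd h hj, fun k h => absurd ⟨k, h⟩ hk⟩
  choose a ha1 ha2 using key
  have hne : ∀ j ∈ Finset.range (l * n + n), q j ≠ 0 := fun j _ => (hqp j).ne_zero
  have hpw : Set.Pairwise (Finset.range (l * n + n) : Set ℕ) (Function.onFun Nat.Coprime q) :=
    fun i _ j _ hij => hcop i j hij
  obtain ⟨i, hi⟩ : ∃ i, i = Nat.chineseRemainderOfFinset a q _ hne hpw := ⟨_, rfl⟩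
  have hmod : ∀ j ∈ Finset.range (l * n + n), i ≡ a j [MOD q j] := by
    rw [hi]
    exact (Nat.chineseRemainderOfFinset a q _ hne hpw).2
  refine ⟨i, ?_, fun k => ?_⟩
  · rw [hi]
    exact Nat.chineseRemainderOfFinset_lt_prod a q hne hpw
  have hd : ∀ j, j < l * n + n → (q j ∣ p k + i ↔ q j ∣ p k + a j) := fun j hj =>
    ((hmod j (Finset.mem_range.2 hj)).add_left (p k)).dvd_iff dvd_rfl
  have hk := k.2
  have hk2 : q (l * n + k) ∣ p k + i := (hd _ (by omega)).2 (ha2 _ k rfl)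
  have hex : ∃ j, q j ∣ p k + i := ⟨_, hk2⟩
  simp only [dif_pos hex]
  have hle : Nat.find hex ≤ l * n + k := Nat.find_min' hex hk2
  have hge : l * n ≤ Nat.find hex := by
    by_contra! h
    exact ha1 _ h k ((hd _ (by omega)).1 (Nat.find_spec hex))
  apply Nat.div_eq_of_lt_le hge
  rw [Nat.succ_mul]
  omega
end

section
/- For every positive integer n there exists a function f : ℤ → ℕ such that for all l,d ∈ ℕ there exists m ∈ ℕ such that for every function p : {0,…,n−1} → ℤ with |p(k)−p(k')| ≤ d for all k,k' < n, there exists a natural number i < m with f(p(k)+i) = l for every k < n. -/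
namespace PM

def B (j : ℕ) : ℤ := ((j : ℤ) + 1) * ((j : ℤ) + 1)

def r (n j : ℕ) : ℤ := (n : ℤ) * (B j + 1) + 1

def Q (n : ℕ) : ℕ → ℤ
  | 0 => 1
  | j + 1 => Q n j * r n j

def dig (n j : ℕ) (x : ℤ) : ℤ := (x / Q n j) % r n j

open Classical in
noncomputable def f (n : ℕ) (x : ℤ) : ℕ :=
  if h : ∃ j, dig n j x < B j then
    (dig n (Nat.find h) x / ((Nat.find h : ℤ) + 1)).toNat else 0

lemma B_pos (j : ℕ) : 0 < B j := by unfold B; positivity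

lemma r_pos (n j : ℕ) : 0 < r n j := by
  have := B_pos j
  unfold r; positivity

lemma Q_pos (n j : ℕ) : 0 < Q n j := by
  induction j with
  | zero => simp [Q]
  | succ j ih => exact mul_pos ih (r_pos n j)

lemma pigeon (n : ℕ) (r B : ℤ) (hB : 0 < B) (hr : r = n * (B + 1) + 1) (c : Fin n → ℤ) :
    ∃ t : ℤ, 0 ≤ t ∧ t < r ∧ ∀ k, B < (t + c k) % r := by
  by_contra hcon
  push Not at hcon
  have hrp : 0 < r := by rw [hr]; positivity
  have hsub : Finset.Ico (0 : ℤ) r ⊆ Finset.univ.biUnion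
      (fun k : Fin n => (Finset.Icc (0 : ℤ) B).image (fun v => (v - c k) % r)) := by
    intro t ht
    rw [Finset.mem_Ico] at ht
    obtain ⟨k, hk⟩ := hcon t ht.1 ht.2
    simp only [Finset.mem_biUnion, Finset.mem_image, Finset.mem_Icc, Finset.mem_univ, true_and]
    refine ⟨k, (t + c k) % r, ⟨Int.emod_nonneg _ hrp.ne', hk⟩, ?_⟩
    rw [Int.emod_sub_emod, add_sub_cancel_right]
    exact Int.emod_eq_of_lt ht.1 ht.2
  have h1 := Finset.card_le_card hsub
  have h2 : (Finset.univ.biUnion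
      (fun k : Fin n => (Finset.Icc (0 : ℤ) B).image (fun v => (v - c k) % r))).card
      ≤ (Finset.univ : Finset (Fin n)).card * (B + 1).toNat := by
    apply Finset.card_biUnion_le_card_mul
    intro k _
    refine Finset.card_image_le.trans ?_
    simp
  have h3 := h1.trans h2
  simp only [Int.card_Ico, Finset.card_univ, Fintype.card_fin] at h3
  have h4 : (((r - 0).toNat : ℕ) : ℤ) ≤ ((n * (B + 1).toNat : ℕ) : ℤ) := by exact_mod_cast h3
  push_cast at h4
  rw [Int.toNat_of_nonneg (by linarith), Int.toNat_of_nonneg (by linarith)] at h4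
  linarith

lemma pass (n : ℕ) (j : ℕ) : ∀ p : Fin n → ℤ, ∃ s : ℤ, 0 ≤ s ∧ s < Q n j ∧
    ∀ k, ∀ i < j, B i ≤ dig n i (p k + s) := by
  induction j with
  | zero => intro p; exact ⟨0, le_rfl, by simp [Q], by simp⟩
  | succ j ih =>
    intro p
    have hQ := Q_pos n j
    have hr := r_pos n j
    obtain ⟨t, ht0, htr, ht⟩ := pigeon n (r n j) (B j) (B_pos j) rfl (fun k => p k / Q n j + 1)
    obtain ⟨s, hs0, hsQ, hs⟩ := ih (fun k => p k + t * Q n j)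
    refine ⟨t * Q n j + s, by positivity, ?_, ?_⟩
    · simp only [Q]; nlinarith
    intro k i hi
    rw [← add_assoc]
    rcases Nat.lt_succ_iff_lt_or_eq.mp hi with h | h
    · exact hs k i h
    subst h
    have hk := ht k
    unfold dig
    have e1 : (p k + t * Q n i + s) / Q n i = t + (p k + s) / Q n i := by
      rw [show p k + t * Q n i + s = (p k + s) + t * Q n i by ring,
        Int.add_mul_ediv_right _ _ hQ.ne']; ring
    rw [e1]
    have h5 := Int.emod_add_mul_ediv (p k) (Q n i)
    have h6 := Int.emod_nonneg (p k) hQ.ne'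
    have h7 := Int.emod_lt_of_pos (p k) hQ
    have e2 : (p k + s) / Q n i = p k / Q n i ∨ (p k + s) / Q n i = p k / Q n i + 1 := by
      have h8 : p k / Q n i ≤ (p k + s) / Q n i := Int.ediv_le_ediv hQ (by linarith)
      have h9 : (p k + s) / Q n i < p k / Q n i + 2 := by
        apply Int.ediv_lt_of_lt_mul hQ; nlinarith
      omega
    rcases e2 with e | e
    · rw [e]
      set y := t + (p k / Q n i + 1) with hy
      rw [show t + p k / Q n i = y - 1 by rw [hy]; ring]
      have hl := Int.emod_lt_of_pos y hr
      have hB := B_pos i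
      rw [← Int.emod_sub_emod, Int.emod_eq_of_lt (by omega) (by omega)]
      omega
    · rw [e]; exact hk.le

lemma f_eq (n l j : ℕ) (x : ℤ) (h1 : ∀ i < j, B i ≤ dig n i x) (hl : l ≤ j)
    (h2 : (l : ℤ) * (j + 1) ≤ dig n j x) (h3 : dig n j x < ((l : ℤ) + 1) * (j + 1)) :
    f n x = l := by
  classical
  have hj : dig n j x < B j := by
    unfold B
    have : (l : ℤ) ≤ j := by exact_mod_cast hl
    nlinarith
  have h : ∃ j, dig n j x < B j := ⟨j, hj⟩
  have hf : Nat.find h = j := by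
    rw [Nat.find_eq_iff]
    exact ⟨hj, fun i hi => not_lt.mpr (h1 i hi)⟩
  unfold f
  rw [dif_pos h]
  have key : dig n j x / ((j : ℤ) + 1) = l := by
    have hp : (0 : ℤ) < (j : ℤ) + 1 := by positivity
    apply le_antisymm
    · exact Int.lt_add_one_iff.mp (Int.ediv_lt_of_lt_mul hp h3)
    · exact (Int.le_ediv_iff_mul_le hp).mpr h2
  have : dig n (Nat.find h) x / ((Nat.find h : ℤ) + 1) = l := by rw [hf]; exact key
  rw [← Int.toNat_natCast l]
  convert congrArg Int.toNat this using 1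

end PM

/-- Corollary 3.8: for every positive integer `n` there is `f : ℤ → ℕ` such that
for all `l, d < ω` there is `m < ω` such that for every `p : n → ℤ` of diameter at
most `d`, there is `i < m` with `f (p k + i) = l` for every `k < n`. -/
theorem projection_map (n : ℕ) (hn : 0 < n) :
    ∃ f : ℤ → ℕ, ∀ l d : ℕ, ∃ m : ℕ, ∀ p : Fin n → ℤ,
      (∀ k k' : Fin n, |p k - p k'| ≤ (d : ℤ)) →
      ∃ i < m, ∀ k : Fin n, f (p k + (i : ℤ)) = l := by
  refine ⟨PM.f n, fun l d => ?_⟩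
  set j := l + d with hj
  have hQ := PM.Q_pos n j
  have hr := PM.r_pos n j
  refine ⟨(2 * PM.Q n (j + 1)).toNat, fun p hp => ?_⟩
  obtain ⟨k0, hk0⟩ : ∃ k0, ∀ k, p k0 ≤ p k := by
    have : Nonempty (Fin n) := ⟨⟨0, hn⟩⟩
    exact Finite.exists_min p
  have hQ' := PM.Q_pos n (j + 1)
  have hQe : PM.Q n (j + 1) = PM.Q n j * PM.r n j := rfl
  have hr1 : 1 ≤ PM.r n j := hr
  set T : ℤ := l * (j + 1) * PM.Q n j with hT
  set i0 := (T - p k0) % PM.Q n (j + 1) with hi0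
  have a1 : 0 ≤ i0 := Int.emod_nonneg _ hQ'.ne'
  have a2 : i0 < PM.Q n (j + 1) := Int.emod_lt_of_pos _ hQ'
  obtain ⟨s, hs0, hsQ, hs⟩ := PM.pass n j (fun k => p k + i0)
  have hQQ : PM.Q n j ≤ PM.Q n (j + 1) := by rw [hQe]; nlinarith
  refine ⟨(i0 + s).toNat, by omega, fun k => ?_⟩
  rw [Int.toNat_of_nonneg (by omega), ← add_assoc]
  have hlj : (l : ℤ) ≤ j := by omega
  have hdj : (d : ℤ) ≤ j := by omega
  have hk1 := hk0 k
  have hk2 := (abs_le.mp (hp k k0)).2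
  -- the position inside the period
  obtain ⟨c, hc⟩ : ∃ c, p k0 + i0 = T + PM.Q n (j + 1) * c := by
    refine ⟨-((T - p k0) / PM.Q n (j + 1)), ?_⟩
    have := Int.emod_add_mul_ediv (T - p k0) (PM.Q n (j + 1))
    rw [← hi0] at this
    linarith
  set e := p k - p k0 + s with he
  have he0 : 0 ≤ e := by omega
  have he1 : e < (j + 1) * PM.Q n j := by nlinarith
  have hdiv : (p k + i0 + s) / PM.Q n j = (l * (j + 1) + e / PM.Q n j) + PM.r n j * c := by
    have : p k + i0 + s = e + (l * (j + 1) + PM.r n j * c) * PM.Q n j := by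
      have : p k + i0 + s = (p k0 + i0) + e := by rw [he]; ring
      rw [this, hc, hT, hQe]; ring
    rw [this, Int.add_mul_ediv_right _ _ hQ.ne']; ring
  have b0 : 0 ≤ e / PM.Q n j := Int.ediv_nonneg he0 hQ.le
  have b1 : e / PM.Q n j < j + 1 := Int.ediv_lt_of_lt_mul hQ he1
  have hBr : PM.B j < PM.r n j := by
    have : (1 : ℤ) ≤ n := by exact_mod_cast hn
    have := PM.B_pos j
    unfold PM.r; nlinarith
  have hlt : (l : ℤ) * (j + 1) + e / PM.Q n j < ((l : ℤ) + 1) * (j + 1) := by linarith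
  have hlB : ((l : ℤ) + 1) * (j + 1) ≤ PM.B j := by unfold PM.B; nlinarith
  have hdig : PM.dig n j (p k + i0 + s) = l * (j + 1) + e / PM.Q n j := by
    unfold PM.dig
    rw [hdiv, Int.add_mul_emod_self_left]
    exact Int.emod_eq_of_lt (by positivity) (by linarith)
  exact PM.f_eq n l j _ (hs k) (by omega) (by rw [hdig]; linarith) (by rw [hdig]; exact hlt)
end
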